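/- Let k be a commutative ring, n ≥ 1, and u ∈ Tuple(n). Let gr_u be the chain complex over k whose degree-m part is the free k-module on the set {b ∈ STuple(n,m) : p(b) = u}, with differential d_gr(B_0 | … | B_m) = Σ_{i=0}^{m-1} (-1)^{i+1} (B_0 | … | B_{i-1} | B_iB_{i+1} | B_{i+2} | … | B_m). Then gr_u is isomorphic as a chain complex to C_*(Cuts(u)), and in particular gr_u is exact: its homology vanishes in every degree. -/

import Mathlib

/-!
A split tuple with concatenation `u` is determined by the positions in `u` at which its blocks of
index `≥ 1` begin. The two conditions on heads say together that each head is smaller than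
everything to its right, i.e. that each such position is an admissible cut of `u`
(`IsSTuple.goodPos`); conversely, cutting `u` along any set of admissible cuts gives a split tuple
(`GoodPos.isSTuple`). Hence the basis of `gr_u` in degree `m` is in bijection with the `m`-element
subsets of `Cuts(u)` (`grEquiv`).

Merging the blocks `Bᵢ` and `Bᵢ₊₁` deletes the `i`-th cut (counted from `0`), so the bijection
carries the differential of `gr_u` to the simplicial one up to the global sign `-1`
(`simplexD_grEquiv`). Twisting by `(-1) ^ m` in degree `m` gives an isomorphism of complexes
(`grIso_comm`).

For exactness, `n` is always an admissible cut, so `Cuts(u)` is nonempty, and for a nonempty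
finite linear order with minimum `a` the map `s ↦ {a} ∪ s` (zero if `a ∈ s`) is a contracting
homotopy of `C_*(E)` (`simplex_homotopy`, `simplex_exact`).
-/

def IsSTuple (n m : ℕ) (B : Fin (m + 1) → List ℕ) : Prop :=
  (∀ i, B i ≠ []) ∧
  ((List.ofFn B).flatten.Perm (List.range (n + 1))) ∧
  (∀ i j : Fin (m + 1), i < j → (B i).headI < (B j).headI) ∧
  (∀ i : Fin (m + 1), ∀ x ∈ (B i).tail, (B i).headI < x)

structure STuple (n m : ℕ) where
  B : Fin (m + 1) → List ℕ
  prop : IsSTuple n m B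

def IsTuple (n : ℕ) (u : List ℕ) : Prop :=
  u.Perm (List.range (n + 1)) ∧ u.headI = 0

/-- The set of admissible cuts of `u`. -/
def Cuts (n : ℕ) (u : List ℕ) : Finset ℕ :=
  (Finset.Icc 1 n).filter (fun i => ∀ j ∈ Finset.Ioc i n, u.getD i 0 < u.getD j 0)

/-- Merging two consecutive blocks `Bᵢ` and `Bᵢ₊₁` into their concatenation. -/
def mergeAt {m : ℕ} (B : Fin (m + 2) → List ℕ) (i : Fin (m + 1)) : Fin (m + 1) → List ℕ :=
  fun l => if l = i then B i.castSucc ++ B i.succ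
    else if l < i then B l.castSucc else B l.succ

/-- Degree-`ℓ` part of the chain complex `C_*(E)` of a finite linearly ordered set. -/
abbrev SimplexChain (k : Type*) [CommRing k] (E : Type*) [Fintype E] [LinearOrder E]
    (ℓ : ℕ) : Type _ :=
  {s : Finset E // s.card = ℓ} →₀ k

/-- The differential of `C_*(E)`. -/
noncomputable def simplexD (k : Type*) [CommRing k] (E : Type*) [Fintype E] [LinearOrder E]
    (ℓ : ℕ) : SimplexChain k E (ℓ + 1) →ₗ[k] SimplexChain k E ℓ :=
  Finsupp.lift (SimplexChain k E ℓ) k {s : Finset E // s.card = ℓ + 1}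
    (fun s => ∑ e ∈ s.1.attach,
      ((-1 : ℤ) ^ ((s.1.filter (fun x => x < e.1)).card)) •
        Finsupp.single
          ⟨s.1.erase e.1, by simp [Finset.card_erase_of_mem e.2, s.2]⟩ (1 : k))

/-- Degree-`m` part of `gr_u`: the free `k`-module on the `m`-split `(n+1)`-tuples `b`
with `p(b) = u`. -/
abbrev GrU (k : Type*) [CommRing k] (n : ℕ) (u : List ℕ) (m : ℕ) : Type _ :=
  {b : STuple n m // (List.ofFn b.B).flatten = u} →₀ k

open Classical in
/-- The basis element of `GrU` attached to a family of blocks, when it is a split tuple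
with projection `u` (and `0` otherwise). -/
noncomputable def toGr (k : Type*) [CommRing k] (n : ℕ) (u : List ℕ) (m : ℕ)
    (B : Fin (m + 1) → List ℕ) : GrU k n u m :=
  if h : IsSTuple n m B ∧ (List.ofFn B).flatten = u then
    Finsupp.single ⟨⟨B, h.1⟩, h.2⟩ 1 else 0

/-- The differential of `gr_u`:
`d_gr(B₀ | … | B_{m+1}) = Σᵢ (-1)^{i+1} (B₀ | … | BᵢBᵢ₊₁ | … | B_{m+1})`. -/
noncomputable def dgrU (k : Type*) [CommRing k] (n : ℕ) (u : List ℕ) (m : ℕ) :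
    GrU k n u (m + 1) →ₗ[k] GrU k n u m :=
  Finsupp.lift (GrU k n u m) k {b : STuple n (m + 1) // (List.ofFn b.B).flatten = u}
    (fun b => ∑ i : Fin (m + 1),
      ((-1 : ℤ) ^ ((i : ℕ) + 1)) • toGr k n u m (mergeAt b.1.B i))

/-! ### Split tuples as sequences of cut positions -/

/-- `p` lists the boundaries `0 = p 0 < p 1 < ⋯ < p (m + 1) = n + 1` of `m + 1` consecutive
blocks of `u`, where the inner boundaries are admissible cuts. Only the values of `p` at
`0, …, m + 1` matter. -/
structure GoodPos (n m : ℕ) (u : List ℕ) (p : ℕ → ℕ) : Prop where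
  zero : p 0 = 0
  last : p (m + 1) = n + 1
  mono : ∀ i j, i < j → j ≤ m + 1 → p i < p j
  cut : ∀ j, 1 ≤ j → j ≤ m → p j ∈ Cuts n u

/-- The blocks of `u` delimited by the boundaries `p`. -/
def blocks (u : List ℕ) (p : ℕ → ℕ) (m : ℕ) : Fin (m + 1) → List ℕ :=
  fun i => (u.take (p (i + 1))).drop (p i)

/-- The starting position of the `j`-th block of `B` inside the concatenation of `B`. -/
def cpos {m : ℕ} (B : Fin (m + 1) → List ℕ) (j : ℕ) : ℕ :=
  (((List.ofFn B).map List.length).take j).sum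

/-- The set of inner boundaries of a family of blocks. -/
def cutSet {m : ℕ} (B : Fin (m + 1) → List ℕ) : Finset ℕ :=
  (Finset.Icc 1 m).image (cpos B)

lemma IsTuple.length {n : ℕ} {u : List ℕ} (hu : IsTuple n u) : u.length = n + 1 := by
  simpa using hu.1.length_eq

/-- Admissibility of a cut expressed through the head and the tail of the remaining suffix. -/
lemma mem_Cuts_iff {n : ℕ} {u : List ℕ} (hu : u.length = n + 1) (i : ℕ) :
    i ∈ Cuts n u ↔ (1 ≤ i ∧ i ≤ n) ∧ ∀ x ∈ (u.drop i).tail, (u.drop i).headI < x := by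
  simp only [Cuts, Finset.mem_filter, Finset.mem_Icc, Finset.mem_Ioc]
  refine and_congr_right fun ⟨h1, h2⟩ => ?_
  have hi : i < u.length := by omega
  have hh : (u.drop i).headI = u.getD i 0 := by
    rw [List.drop_eq_getElem_cons hi, List.headI_cons, List.getD_eq_getElem u 0 hi]
  rw [hh, List.tail_drop]
  constructor
  · intro h x hx
    obtain ⟨l, hl, rfl⟩ := List.mem_iff_getElem.1 hx
    rw [List.length_drop] at hl
    have := h (i + 1 + l) ⟨by omega, by omega⟩
    rw [List.getElem_drop]
    rwa [List.getD_eq_getElem u 0 (n := i + 1 + l) (by omega)] at this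
  · rintro h j ⟨hj1, hj2⟩
    refine h _ ?_
    rw [List.getD_eq_getElem u 0 (n := j) (by omega)]
    rw [List.mem_iff_getElem]
    refine ⟨j - (i + 1), by simp; omega, ?_⟩
    rw [List.getElem_drop]
    congr 1; omega

/-- Position `0` satisfies the cut inequality as well, because the first entry is `0`. -/
lemma IsTuple.zero_lt {n : ℕ} {u : List ℕ} (hu : IsTuple n u) :
    ∀ x ∈ (u.drop 0).tail, (u.drop 0).headI < x := by
  have hnd : u.Nodup := hu.1.nodup_iff.2 List.nodup_range
  have h0 := hu.2
  cases u with
  | nil => simp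
  | cons a t =>
    simp only [List.headI_cons] at h0
    subst h0
    simp only [List.nodup_cons] at hnd
    intro x hx
    simp only [List.drop_zero, List.tail_cons, List.headI_cons] at hx ⊢
    exact Nat.pos_of_ne_zero fun h => hnd.1 (h ▸ hx)

/-- Concatenating two consecutive segments of a list. -/
lemma segment_append (u : List ℕ) {a b c : ℕ} (hab : a ≤ b) (hbc : b ≤ c) (hc : c ≤ u.length) :
    (u.take b).drop a ++ (u.take c).drop b = (u.take c).drop a := by
  have h : u.take b = (u.take c).take b := by rw [List.take_take, min_eq_left hbc]
  have h2 : u.take c = u.take b ++ (u.take c).drop b := by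
    conv_rhs => rw [h, List.take_append_drop]
  conv_rhs => rw [h2]
  rw [List.drop_append_of_le_length]
  simp; omega

namespace GoodPos

variable {n m : ℕ} {u : List ℕ} {p : ℕ → ℕ}

lemma le (hp : GoodPos n m u p) {i j : ℕ} (hij : i ≤ j) (hj : j ≤ m + 1) : p i ≤ p j := by
  rcases hij.eq_or_lt with rfl | h
  · exact le_rfl
  · exact (hp.mono i j h hj).le

lemma flatten_take (hp : GoodPos n m u p) (hu : u.length = n + 1) (j : ℕ) (hj : j ≤ m + 1) :
    ((List.ofFn (blocks u p m)).take j).flatten = u.take (p j) := by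
  induction j with
  | zero => simp [hp.zero]
  | succ j ih =>
    have h1 := hp.le (Nat.zero_le j) (by omega)
    have h2 := hp.le (Nat.le_add_right j 1) hj
    have h3 := hp.le hj le_rfl
    rw [hp.last] at h3
    rw [List.take_succ_eq_append_getElem (by simpa using hj), List.flatten_append,
      ih (by omega)]
    have := segment_append u (Nat.zero_le (p j)) h2 (by omega)
    simpa [blocks, -List.ofFn_succ] using this

lemma flatten (hp : GoodPos n m u p) (hu : u.length = n + 1) :
    (List.ofFn (blocks u p m)).flatten = u := by
  have := hp.flatten_take hu (m + 1) le_rfl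
  rwa [List.take_of_length_le (by simp), hp.last, List.take_of_length_le (by omega)] at this

lemma cpos_blocks (hp : GoodPos n m u p) (hu : u.length = n + 1) (j : ℕ) (hj : j ≤ m + 1) :
    cpos (blocks u p m) j = p j := by
  have h3 := hp.le hj le_rfl
  rw [hp.last] at h3
  have := congrArg List.length (hp.flatten_take hu j hj)
  rw [List.length_flatten, List.length_take, List.map_take] at this
  rw [cpos, this]; omega

lemma suffix_lt (hp : GoodPos n m u p) (hu : IsTuple n u) (j : ℕ) (hj : j ≤ m) :
    ∀ x ∈ (u.drop (p j)).tail, (u.drop (p j)).headI < x := by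
  rcases Nat.eq_zero_or_pos j with rfl | h
  · rw [hp.zero]; exact hu.zero_lt
  · exact ((mem_Cuts_iff hu.length _).1 (hp.cut j h hj)).2

/-- Cutting `u` at admissible positions yields a split tuple. -/
lemma isSTuple (hp : GoodPos n m u p) (hu : IsTuple n u) : IsSTuple n m (blocks u p m) := by
  have hl := hu.length
  have key : ∀ i : Fin (m + 1), ∃ t t', blocks u p m i = u.getD (p i) 0 :: t ∧
      u.drop (p i) = u.getD (p i) 0 :: (t ++ t') := by
    intro i
    have h1 := hp.mono i (i + 1) (by omega) (by omega)
    have h2 := hp.le (show (i : ℕ) + 1 ≤ m + 1 by omega) le_rfl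
    rw [hp.last] at h2
    refine ⟨(u.take (p (i + 1))).drop (p i + 1), u.drop (p (i + 1)), ?_, ?_⟩
    · rw [blocks, List.drop_eq_getElem_cons (by simp; omega), List.getElem_take,
        List.getD_eq_getElem u 0 (by omega)]
    · rw [List.drop_eq_getElem_cons (by omega), List.getD_eq_getElem u 0 (by omega)]
      congr 1
      have := segment_append u (a := p i + 1) (b := p (i + 1)) (c := n + 1) h1 h2 hl.ge
      rw [List.take_of_length_le (i := n + 1) (by omega)] at this
      exact this.symm
  have hhead : ∀ i : Fin (m + 1), (blocks u p m i).headI = u.getD (p i) 0 ∧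
      (u.drop (p i)).headI = u.getD (p i) 0 := by
    intro i
    obtain ⟨t, t', h1, h2⟩ := key i
    rw [h1, h2]; simp
  refine ⟨fun i => ?_, ?_, fun i j hij => ?_, fun i x hx => ?_⟩
  · obtain ⟨t, t', h1, h2⟩ := key i
    simp [h1]
  · rw [hp.flatten hl]; exact hu.1
  · have hlt := hp.mono i j hij (by omega)
    have h2 := hp.mono j (m + 1) (by omega) le_rfl
    rw [hp.last] at h2
    rw [(hhead i).1, (hhead j).1, ← (hhead i).2]
    refine hp.suffix_lt hu i (by omega) _ ?_
    rw [List.tail_drop, List.mem_iff_getElem]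
    refine ⟨p j - (p i + 1), by simp; omega, ?_⟩
    rw [List.getElem_drop, List.getD_eq_getElem u 0 (by omega)]
    congr 1; omega
  · rw [(hhead i).1, ← (hhead i).2]
    refine hp.suffix_lt hu i (by omega) _ ?_
    obtain ⟨t, t', h1, h2⟩ := key i
    rw [h1] at hx
    rw [h2]
    simp only [List.tail_cons, List.mem_append] at hx ⊢
    exact Or.inl hx

end GoodPos

lemma blocks_cpos {m : ℕ} (B : Fin (m + 1) → List ℕ) :
    blocks (List.ofFn B).flatten (cpos B) m = B := by
  funext i
  have := List.drop_take_succ_flatten_eq_getElem (List.ofFn B) i (by simp only [List.length_ofFn]; exact i.2)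
  simpa [blocks, cpos, -List.ofFn_succ] using this

/-- The block boundaries of a split tuple over `u` are admissible cuts of `u`. -/
lemma IsSTuple.goodPos {n m : ℕ} {u : List ℕ} {B : Fin (m + 1) → List ℕ} (hB : IsSTuple n m B)
    (hu : IsTuple n u) (hBu : (List.ofFn B).flatten = u) : GoodPos n m u (cpos B) := by
  obtain ⟨hne, -, hheads, htails⟩ := hB
  have hsucc : ∀ j, (hj : j < m + 1) → cpos B (j + 1) = cpos B j + (B ⟨j, hj⟩).length := by
    intro j hj
    rw [cpos, List.sum_take_succ _ _ (by simpa using hj)]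
    simp [cpos, -List.ofFn_succ]
  have hmono : ∀ i j, i < j → j ≤ m + 1 → cpos B i < cpos B j := by
    intro i j hij
    induction j, hij using Nat.le_induction with
    | base =>
      intro hj
      rw [hsucc i (by omega)]
      have := List.length_pos_iff.2 (hne ⟨i, by omega⟩)
      omega
    | succ j hij ih =>
      intro hj
      have := ih (by omega)
      rw [hsucc j (by omega)]
      omega
  have hlast : cpos B (m + 1) = n + 1 := by
    rw [← hu.length, ← hBu, cpos, List.take_of_length_le (by simp), List.length_flatten]
  refine ⟨by simp [cpos], hlast, hmono, fun j hj1 hj2 => ?_⟩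
  rw [mem_Cuts_iff hu.length]
  refine ⟨⟨?_, ?_⟩, ?_⟩
  · have := hmono 0 j (by omega) (by omega); omega
  · have := hmono j (m + 1) (by omega) le_rfl; omega
  · have hd : u.drop (cpos B j) = B ⟨j, by omega⟩ ++ ((List.ofFn B).drop (j + 1)).flatten := by
      rw [← hBu, cpos, List.drop_sum_flatten, List.drop_eq_getElem_cons (by simp; omega)]
      simp [-List.ofFn_succ]
    rw [hd]
    obtain ⟨a, t, hat⟩ := List.exists_cons_of_ne_nil (hne ⟨j, by omega⟩)
    have ht := htails ⟨j, by omega⟩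
    rw [hat] at ht ⊢
    simp only [List.cons_append, List.tail_cons, List.headI_cons, List.mem_append] at ht ⊢
    rintro x (hx | hx)
    · exact ht x hx
    · obtain ⟨l, hl, hxl⟩ := List.mem_flatten.1 hx
      obtain ⟨i, hi, rfl⟩ := List.mem_iff_getElem.1 hl
      simp only [List.length_drop, List.length_ofFn] at hi
      rw [List.getElem_drop, List.getElem_ofFn] at hxl
      have h1 := hheads ⟨j, by omega⟩ ⟨j + 1 + i, by omega⟩ (by simp [Fin.lt_def]; omega)
      have h2 := htails ⟨j + 1 + i, by omega⟩
      obtain ⟨b, t', hbt⟩ := List.exists_cons_of_ne_nil (hne ⟨j + 1 + i, by omega⟩)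
      rw [hbt] at hxl h1 h2
      rw [hat] at h1
      simp only [List.headI_cons, List.tail_cons, List.mem_cons] at hxl h1 h2
      rcases hxl with rfl | hxl
      · exact h1
      · exact h1.trans (h2 x hxl)

/-! ### Merging blocks deletes a cut -/

/-- The boundary sequence obtained from `p` by omitting the boundary `p (i + 1)`. -/
def skipPos (p : ℕ → ℕ) (i : ℕ) : ℕ → ℕ := fun j => if j ≤ i then p j else p (j + 1)

lemma GoodPos.skip {n m : ℕ} {u : List ℕ} {p : ℕ → ℕ} (hp : GoodPos n (m + 1) u p) {i : ℕ}
    (hi : i ≤ m) : GoodPos n m u (skipPos p i) := by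
  refine ⟨by simp [skipPos, hp.zero], ?_, fun a b hab hb => ?_, fun j h1 h2 => ?_⟩
  · simp only [skipPos]; rw [if_neg (by omega), hp.last]
  · simp only [skipPos]
    split_ifs
    all_goals first | omega | exact hp.mono _ _ (by omega) (by omega)
  · simp only [skipPos]
    split_ifs
    all_goals exact hp.cut _ (by omega) (by omega)

lemma mergeAt_blocks {n m : ℕ} {u : List ℕ} {p : ℕ → ℕ} (hp : GoodPos n (m + 1) u p)
    (hu : u.length = n + 1) (i : Fin (m + 1)) :
    mergeAt (blocks u p (m + 1)) i = blocks u (skipPos p i) m := by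
  funext l
  simp only [mergeAt]
  split_ifs with h1 h2
  · subst h1
    have := hp.le (show (l : ℕ) + 1 + 1 ≤ m + 1 + 1 by omega) le_rfl
    rw [hp.last] at this
    have := segment_append u (hp.le (Nat.le_add_right (l : ℕ) 1) (by omega))
      (hp.le (Nat.le_add_right ((l : ℕ) + 1) 1) (by omega)) (by omega)
    simpa [blocks, skipPos] using this
  · rw [Fin.lt_def] at h2
    simp [blocks, skipPos, h2.le, Nat.succ_le_of_lt h2]
  · have h3 : (i : ℕ) < l := by
      rw [Fin.lt_def] at h2; rw [Fin.ext_iff] at h1; omega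
    simp [blocks, skipPos, h3.not_ge, show ¬ (l : ℕ) + 1 ≤ i by omega]

lemma cutSet_blocks {n m : ℕ} {u : List ℕ} {p : ℕ → ℕ} (hp : GoodPos n m u p)
    (hu : u.length = n + 1) : cutSet (blocks u p m) = (Finset.Icc 1 m).image p := by
  refine Finset.image_congr fun j hj => ?_
  simp only [Finset.coe_Icc, Set.mem_Icc] at hj
  exact hp.cpos_blocks hu j (by omega)

lemma GoodPos.injOn {n m : ℕ} {u : List ℕ} {p : ℕ → ℕ} (hp : GoodPos n m u p) :
    Set.InjOn p (Set.Icc 1 m) := by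
  intro a ha b hb hab
  simp only [Set.mem_Icc] at ha hb
  rcases lt_trichotomy a b with h | h | h
  · have := hp.mono a b h (by omega); omega
  · exact h
  · have := hp.mono b a h (by omega); omega

lemma GoodPos.image_skip {n m : ℕ} {u : List ℕ} {p : ℕ → ℕ} (hp : GoodPos n (m + 1) u p) {i : ℕ}
    (hi : i ≤ m) : (Finset.Icc 1 m).image (skipPos p i) =
      ((Finset.Icc 1 (m + 1)).image p).erase (p (i + 1)) := by
  ext x
  simp only [Finset.mem_image, Finset.mem_erase, Finset.mem_Icc, skipPos]
  constructor
  · rintro ⟨j, hj, rfl⟩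
    split_ifs with h
    · exact ⟨(hp.mono j (i + 1) (by omega) (by omega)).ne, j, by omega, rfl⟩
    · exact ⟨(hp.mono (i + 1) (j + 1) (by omega) (by omega)).ne', j + 1, by omega, rfl⟩
  · rintro ⟨hne, j, hj, rfl⟩
    have hji : j ≠ i + 1 := by rintro rfl; exact hne rfl
    rcases Nat.lt_or_gt_of_ne hji with h | h
    · exact ⟨j, by omega, if_pos (by omega)⟩
    · refine ⟨j - 1, by omega, ?_⟩
      rw [if_neg (by omega)]
      congr 1; omega

/-- The boundary `p (i + 1)` is preceded by exactly `i` inner boundaries; this matches the signs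
of the two differentials. -/
lemma GoodPos.card_lt {n m : ℕ} {u : List ℕ} {p : ℕ → ℕ} (hp : GoodPos n m u p) {i : ℕ}
    (hi : i + 1 ≤ m) :
    (((Finset.Icc 1 m).image p).filter (fun x => x < p (i + 1))).card = i := by
  have : ((Finset.Icc 1 m).image p).filter (fun x => x < p (i + 1)) =
      (Finset.Icc 1 i).image p := by
    ext x
    simp only [Finset.mem_filter, Finset.mem_image, Finset.mem_Icc]
    constructor
    · rintro ⟨⟨j, hj, rfl⟩, hlt⟩
      refine ⟨j, ⟨hj.1, ?_⟩, rfl⟩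
      by_contra hcon
      have := hp.le (show i + 1 ≤ j by omega) (by omega)
      omega
    · rintro ⟨j, hj, rfl⟩
      exact ⟨⟨j, by omega, rfl⟩, hp.mono _ _ (by omega) (by omega)⟩
  rw [this, Finset.card_image_of_injOn, Nat.card_Icc, Nat.add_sub_cancel]
  refine hp.injOn.mono fun j hj => ?_
  simp only [Finset.coe_Icc, Set.mem_Icc] at hj ⊢
  omega

/-! ### The bijection between split tuples over `u` and sets of cuts -/

lemma GoodPos.blocks_eq {n m : ℕ} {u : List ℕ} {p q : ℕ → ℕ} (hp : GoodPos n m u p)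
    (hq : GoodPos n m u q) (h : (Finset.Icc 1 m).image p = (Finset.Icc 1 m).image q) :
    blocks u p m = blocks u q m := by
  have hc : ((Finset.Icc 1 m).image q).card = m := by
    rw [Finset.card_image_of_injOn (by simpa using hq.injOn)]; simp
  have aux : ∀ r : ℕ → ℕ, GoodPos n m u r →
      (Finset.Icc 1 m).image r = (Finset.Icc 1 m).image q →
      (fun i : Fin m => r (i + 1)) = ((Finset.Icc 1 m).image q).orderEmbOfFin hc := by
    intro r hr hrq
    refine Finset.orderEmbOfFin_unique hc (fun i => ?_) (fun a b hab => ?_)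
    · rw [← hrq]
      exact Finset.mem_image_of_mem _ (by simp only [Finset.mem_Icc]; omega)
    · exact hr.mono _ _ (by rw [Fin.lt_def] at hab; omega) (by omega)
  have hpq := (aux p hp h).trans (aux q hq rfl).symm
  have heq : ∀ j ≤ m + 1, p j = q j := by
    intro j hj
    rcases Nat.eq_zero_or_pos j with rfl | h0
    · rw [hp.zero, hq.zero]
    · rcases hj.eq_or_lt with rfl | h1
      · rw [hp.last, hq.last]
      · have := congrFun hpq ⟨j - 1, by omega⟩
        simpa [Nat.sub_add_cancel h0] using this
  funext i
  simp only [blocks]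
  rw [heq i (by omega), heq (i + 1) (by omega)]

/-- Every set of `m` cuts is the set of inner boundaries of some boundary sequence. -/
lemma exists_goodPos {n m : ℕ} {u : List ℕ} {F : Finset ℕ} (hF : F ⊆ Cuts n u)
    (hc : F.card = m) : ∃ p, GoodPos n m u p ∧ (Finset.Icc 1 m).image p = F := by
  let p : ℕ → ℕ := fun j => if j = 0 then 0 else
    if h : j - 1 < m then F.orderEmbOfFin hc ⟨j - 1, h⟩ else n + 1
  have hp0 : p 0 = 0 := rfl
  have hps : ∀ i, (h : i < m) → p (i + 1) = F.orderEmbOfFin hc ⟨i, h⟩ := by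
    intro i h; simp [p, h]
  have hpl : p (m + 1) = n + 1 := by simp [p]
  have hcut : ∀ j, 1 ≤ j → j ≤ m → p j ∈ F := by
    intro j h1 h2
    obtain ⟨i, rfl⟩ := Nat.exists_eq_add_of_le' h1
    rw [hps i (by omega)]
    exact Finset.orderEmbOfFin_mem _ _ _
  have hbd : ∀ x ∈ F, 1 ≤ x ∧ x ≤ n := by
    intro x hx
    have := hF hx
    simp only [Cuts, Finset.mem_filter, Finset.mem_Icc] at this
    exact this.1
  refine ⟨p, ⟨hp0, hpl, fun i j hij hj => ?_, fun j h1 h2 => hF (hcut j h1 h2)⟩, ?_⟩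
  · rcases Nat.eq_zero_or_pos i with rfl | hi
    · rcases hj.eq_or_lt with rfl | hj
      · omega
      · have := hbd _ (hcut j (by omega) (by omega)); omega
    · rcases hj.eq_or_lt with rfl | hj
      · have := hbd _ (hcut i (by omega) (by omega)); omega
      · obtain ⟨a, rfl⟩ := Nat.exists_eq_add_of_le' hi
        obtain ⟨b, rfl⟩ := Nat.exists_eq_add_of_le' (show 1 ≤ j by omega)
        rw [hps a (by omega), hps b (by omega)]
        exact (F.orderEmbOfFin hc).strictMono (by rw [Fin.lt_def]; simp only; omega)
  · ext x
    simp only [Finset.mem_image, Finset.mem_Icc]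
    constructor
    · rintro ⟨j, hj, rfl⟩; exact hcut j hj.1 hj.2
    · intro hx
      have : x ∈ Set.range (F.orderEmbOfFin hc) := by
        rw [Finset.range_orderEmbOfFin]; exact hx
      obtain ⟨i, rfl⟩ := this
      exact ⟨i + 1, by omega, hps i i.2⟩

lemma IsSTuple.cutSet_subset {n m : ℕ} {u : List ℕ} {B : Fin (m + 1) → List ℕ}
    (hB : IsSTuple n m B) (hu : IsTuple n u) (hBu : (List.ofFn B).flatten = u) :
    cutSet B ⊆ Cuts n u := by
  intro x hx
  simp only [cutSet, Finset.mem_image, Finset.mem_Icc] at hx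
  obtain ⟨j, hj, rfl⟩ := hx
  exact (hB.goodPos hu hBu).cut j hj.1 hj.2

lemma IsSTuple.card_cutSet {n m : ℕ} {u : List ℕ} {B : Fin (m + 1) → List ℕ}
    (hB : IsSTuple n m B) (hu : IsTuple n u) (hBu : (List.ofFn B).flatten = u) :
    (cutSet B).card = m := by
  rw [cutSet, Finset.card_image_of_injOn (by simpa using (hB.goodPos hu hBu).injOn)]
  simp

/-- A set of natural numbers, restricted to the type of admissible cuts. -/
def toCuts (n : ℕ) (u : List ℕ) (F : Finset ℕ) : Finset {i // i ∈ Cuts n u} :=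
  F.subtype (fun i => i ∈ Cuts n u)

lemma card_toCuts {n : ℕ} {u : List ℕ} {F : Finset ℕ} (hF : F ⊆ Cuts n u) :
    (toCuts n u F).card = F.card := by
  rw [toCuts, Finset.card_subtype, Finset.filter_true_of_mem fun x hx => hF hx]

/-- The decidability instance is arbitrary, so that the lemma also applies to the instance coming
from the linear order on the subtype. -/
lemma toCuts_erase {n : ℕ} {u : List ℕ} {_ : DecidableEq {i // i ∈ Cuts n u}} (F : Finset ℕ) (x : {i // i ∈ Cuts n u}) :
    (toCuts n u F).erase x = toCuts n u (F.erase x) := by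
  ext y
  simp only [toCuts, Finset.mem_erase, Finset.mem_subtype, ne_eq, Subtype.ext_iff]

lemma card_filter_toCuts {n : ℕ} {u : List ℕ} {F : Finset ℕ} (hF : F ⊆ Cuts n u)
    (x : {i // i ∈ Cuts n u}) : ((toCuts n u F).filter (fun y => y < x)).card =
      (F.filter (fun y => y < x.1)).card := by
  rw [← card_toCuts ((Finset.filter_subset _ F).trans hF)]
  congr 1
  ext y
  simp [toCuts]

/-- Split tuples over `u` with `m + 1` blocks correspond to `m`-element sets of admissible cuts,
through the set of inner block boundaries. -/
noncomputable def grEquiv {n : ℕ} {u : List ℕ} (hu : IsTuple n u) (m : ℕ) :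
    {b : STuple n m // (List.ofFn b.B).flatten = u} ≃
      {s : Finset {i // i ∈ Cuts n u} // s.card = m} :=
  Equiv.ofBijective (fun b => ⟨toCuts n u (cutSet b.1.B), by
    rw [card_toCuts (b.1.prop.cutSet_subset hu b.2), b.1.prop.card_cutSet hu b.2]⟩) <| by
    constructor
    · rintro ⟨⟨B, hB⟩, hBu⟩ ⟨⟨C, hC⟩, hCu⟩ h
      simp only at hBu hCu
      have hBC : cutSet B = cutSet C := by
        have h1 : toCuts n u (cutSet B) = toCuts n u (cutSet C) := congrArg Subtype.val h
        ext x
        constructor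
        · intro hx
          have : (⟨x, hB.cutSet_subset hu hBu hx⟩ : {i // i ∈ Cuts n u}) ∈
              toCuts n u (cutSet B) := by simpa [toCuts] using hx
          rw [h1] at this
          simpa [toCuts] using this
        · intro hx
          have : (⟨x, hC.cutSet_subset hu hCu hx⟩ : {i // i ∈ Cuts n u}) ∈
              toCuts n u (cutSet C) := by simpa [toCuts] using hx
          rw [← h1] at this
          simpa [toCuts] using this
      have := (hB.goodPos hu hBu).blocks_eq (hC.goodPos hu hCu) hBC
      have hB' := blocks_cpos B
      have hC' := blocks_cpos C
      rw [hBu] at hB'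
      rw [hCu] at hC'
      have : B = C := by rw [← hB', ← hC', this]
      subst this
      rfl
    · rintro ⟨s, hs⟩
      have hF : s.map (Function.Embedding.subtype _) ⊆ Cuts n u := by
        intro x hx
        obtain ⟨y, -, rfl⟩ := Finset.mem_map.1 hx
        exact y.2
      obtain ⟨p, hp, hpF⟩ := exists_goodPos (m := m) hF (by rw [Finset.card_map, hs])
      refine ⟨⟨⟨blocks u p m, hp.isSTuple hu⟩, hp.flatten hu.length⟩, Subtype.ext ?_⟩
      simp only [cutSet_blocks hp hu.length, hpF]
      ext y
      simp [toCuts]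

/-! ### Exactness of the augmented simplex -/

lemma card_filter_erase_add {E : Type*} [LinearOrder E] {s : Finset E} {e f : E} (he : e ∈ s) (hef : e < f) :
    ((s.erase e).filter (fun x => x < f)).card + 1 = (s.filter (fun x => x < f)).card := by
  rw [Finset.filter_erase]
  exact Finset.card_erase_add_one (by simp [he, hef])

lemma card_filter_erase {E : Type*} [LinearOrder E] {s : Finset E} {e f : E} (hef : ¬ e < f) :
    ((s.erase e).filter (fun x => x < f)).card = (s.filter (fun x => x < f)).card := by
  rw [Finset.filter_erase, Finset.erase_eq_of_notMem (by simp [hef])]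

section Simplex

variable {k : Type*} [CommRing k] {E : Type*} [Fintype E] [LinearOrder E]

variable (k) in
/-- The basis element of `C_ℓ(E)` attached to a finite set `t`, or `0` if `t` does not have
`ℓ` elements. -/
noncomputable def simplexBasis (ℓ : ℕ) (t : Finset E) : SimplexChain k E ℓ :=
  if h : t.card = ℓ then Finsupp.single ⟨t, h⟩ 1 else 0

lemma simplexBasis_of_card {ℓ : ℕ} {t : Finset E} (h : t.card = ℓ) :
    simplexBasis k ℓ t = Finsupp.single ⟨t, h⟩ 1 := dif_pos h

lemma simplexBasis_ne {ℓ : ℕ} {t : Finset E} (h : t.card ≠ ℓ) :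
    simplexBasis k ℓ t = 0 := dif_neg h

lemma simplexD_basis {ℓ : ℕ} {s : Finset E} (hs : s.card = ℓ + 1) :
    simplexD k E ℓ (simplexBasis k (ℓ + 1) s) =
      ∑ e ∈ s, ((-1 : ℤ) ^ (s.filter (fun x => x < e)).card) •
        simplexBasis k ℓ (s.erase e) := by
  rw [simplexBasis_of_card hs, simplexD, Finsupp.lift_apply, Finsupp.sum_single_index (by simp),
    one_smul, ← Finset.sum_attach s]
  refine Finset.sum_congr rfl fun e _ => ?_
  rw [simplexBasis_of_card]

/-- Two linear maps on `C_ℓ(E)` agree once they agree on basis elements. -/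
lemma simplex_hom_ext {ℓ : ℕ} {M : Type*} [AddCommGroup M] [Module k M]
    {f g : SimplexChain k E ℓ →ₗ[k] M}
    (h : ∀ s : Finset E, s.card = ℓ → f (simplexBasis k ℓ s) = g (simplexBasis k ℓ s)) :
    f = g := by
  refine Finsupp.lhom_ext' fun s => LinearMap.ext_ring ?_
  have := h s.1 s.2
  rw [simplexBasis_of_card s.2] at this
  exact this

lemma simplexD_simplexD (ℓ : ℕ) : (simplexD k E ℓ).comp (simplexD k E (ℓ + 1)) = 0 := by
  refine simplex_hom_ext fun s hs => ?_
  rw [LinearMap.comp_apply, simplexD_basis hs, map_sum, LinearMap.zero_apply]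
  have h1 : ∀ e ∈ s, simplexD k E ℓ (((-1 : ℤ) ^ (s.filter (fun x => x < e)).card) •
        simplexBasis k (ℓ + 1) (s.erase e)) =
      ∑ f ∈ s.erase e, ((-1 : ℤ) ^ ((s.filter (fun x => x < e)).card +
        ((s.erase e).filter (fun x => x < f)).card)) •
          simplexBasis k ℓ ((s.erase e).erase f) := by
    intro e he
    rw [map_zsmul, simplexD_basis (by rw [Finset.card_erase_of_mem he, hs]; rfl),
      Finset.smul_sum]
    refine Finset.sum_congr rfl fun f _ => ?_
    rw [smul_smul, pow_add]
  rw [Finset.sum_congr rfl h1, Finset.sum_sigma']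
  -- Deleting `e` then `f` cancels against deleting `f` then `e`.
  refine Finset.sum_involution (fun a _ => ⟨a.2, a.1⟩) ?_ ?_ ?_ ?_
  · rintro ⟨e, f⟩ ha
    simp only [Finset.mem_sigma, Finset.mem_erase] at ha
    obtain ⟨he, hfe, hf⟩ := ha
    simp only
    rw [Finset.erase_right_comm (a := f) (b := e), ← add_smul]
    rcases lt_or_gt_of_ne hfe with h | h
    · rw [card_filter_erase (e := e) (f := f) h.not_gt, ← card_filter_erase_add hf h]
      rw [show ∀ a b : ℕ, (-1 : ℤ) ^ (a + 1 + b) + (-1) ^ (b + a) = 0 by intros; ring, zero_smul]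
    · rw [card_filter_erase (e := f) (f := e) h.not_gt, ← card_filter_erase_add he h]
      rw [show ∀ a b : ℕ, (-1 : ℤ) ^ (a + b) + (-1) ^ (b + 1 + a) = 0 by intros; ring, zero_smul]
  · rintro ⟨e, f⟩ ha _ h
    simp only [Finset.mem_sigma, Finset.mem_erase] at ha
    simp only [Sigma.mk.injEq, heq_eq_eq] at h
    exact ha.2.1 h.1
  · rintro ⟨e, f⟩ ha
    simp only [Finset.mem_sigma, Finset.mem_erase] at ha ⊢
    exact ⟨ha.2.2, ha.2.1.symm, ha.1⟩
  · rintro ⟨e, f⟩ _; rfl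

variable (k) in
/-- The contracting homotopy `s ↦ {a} ∪ s`, with value `0` when `a ∈ s`. -/
noncomputable def simplexH (a : E) (ℓ : ℕ) : SimplexChain k E ℓ →ₗ[k] SimplexChain k E (ℓ + 1) :=
  Finsupp.lift (SimplexChain k E (ℓ + 1)) k {s : Finset E // s.card = ℓ}
    (fun s => simplexBasis k (ℓ + 1) (insert a s.1))

lemma simplexH_basis (a : E) {ℓ : ℕ} {s : Finset E} (hs : s.card = ℓ) :
    simplexH k a ℓ (simplexBasis k ℓ s) = simplexBasis k (ℓ + 1) (insert a s) := by
  rw [simplexBasis_of_card hs, simplexH, Finsupp.lift_apply, Finsupp.sum_single_index (by simp),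
    one_smul]

lemma simplexH_basis_mem {a : E} {ℓ : ℕ} {s : Finset E} (hs : s.card = ℓ) (ha : a ∈ s) :
    simplexH k a ℓ (simplexBasis k ℓ s) = 0 := by
  rw [simplexH_basis a hs, simplexBasis_ne]
  rw [Finset.insert_eq_of_mem ha]; omega

/-- Removing the minimum from `{a} ∪ s` returns `s` with sign `+1`; the other faces are the cone
on the boundary of `s`, with the opposite sign. -/
lemma simplexD_insert {a : E} (ha : ∀ x, a ≤ x) {ℓ : ℕ} {s : Finset E} (hs : s.card = ℓ)
    (has : a ∉ s) : simplexD k E ℓ (simplexBasis k (ℓ + 1) (insert a s)) =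
      simplexBasis k ℓ s - ∑ e ∈ s, ((-1 : ℤ) ^ (s.filter (fun x => x < e)).card) •
        simplexBasis k ℓ (insert a (s.erase e)) := by
  rw [simplexD_basis (by rw [Finset.card_insert_of_notMem has, hs]), Finset.sum_insert has,
    Finset.erase_insert has, sub_eq_add_neg, ← Finset.sum_neg_distrib]
  congr 1
  · rw [Finset.filter_false_of_mem (fun x _ => (ha x).not_gt)]
    simp
  · refine Finset.sum_congr rfl fun e he => ?_
    have hae : a ≠ e := by rintro rfl; exact has he
    rw [Finset.erase_insert_of_ne hae, Finset.filter_insert, if_pos (lt_of_le_of_ne (ha e) hae),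
      Finset.card_insert_of_notMem (by simp [has]), pow_succ, mul_neg_one, neg_smul]

lemma simplex_homotopy_zero {a : E} (ha : ∀ x, a ≤ x) :
    (simplexD k E 0).comp (simplexH k a 0) = LinearMap.id := by
  refine simplex_hom_ext fun s hs => ?_
  obtain rfl := Finset.card_eq_zero.1 hs
  rw [LinearMap.comp_apply, simplexH_basis a hs, simplexD_insert ha hs (by simp)]
  simp

lemma simplex_homotopy {a : E} (ha : ∀ x, a ≤ x) (ℓ : ℕ) :
    (simplexD k E (ℓ + 1)).comp (simplexH k a (ℓ + 1)) +
      (simplexH k a ℓ).comp (simplexD k E ℓ) = LinearMap.id := by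
  refine simplex_hom_ext fun s hs => ?_
  have hcard : ∀ e ∈ s, (s.erase e).card = ℓ := fun e he => by
    rw [Finset.card_erase_of_mem he, hs]; rfl
  rw [LinearMap.add_apply, LinearMap.comp_apply, LinearMap.comp_apply, LinearMap.id_apply,
    simplexD_basis hs, map_sum]
  by_cases has : a ∈ s
  · rw [simplexH_basis_mem hs has, map_zero, zero_add, Finset.sum_eq_single_of_mem a has,
      map_zsmul, simplexH_basis a (hcard a has), Finset.insert_erase has,
      Finset.filter_false_of_mem (fun x _ => (ha x).not_gt)]
    · simp
    · intro e he hea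
      rw [map_zsmul, simplexH_basis_mem (hcard e he) (by simp [has, hea.symm]), smul_zero]
  · rw [simplexH_basis a hs, simplexD_insert ha hs has, sub_add_eq_add_sub, sub_eq_iff_eq_add]
    congr 1
    refine Finset.sum_congr rfl fun e he => ?_
    rw [map_zsmul, simplexH_basis a (hcard e he)]

end Simplex

/-- The complex `C_*(E)` of a nonempty finite linear order is exact. -/
lemma simplex_exact (k : Type*) [CommRing k] (E : Type*) [Fintype E] [LinearOrder E]
    [Nonempty E] : LinearMap.range (simplexD k E 0) = ⊤ ∧
      ∀ m : ℕ, LinearMap.ker (simplexD k E m) = LinearMap.range (simplexD k E (m + 1)) := by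
  obtain ⟨a, ha⟩ : ∃ a : E, ∀ x, a ≤ x :=
    ⟨Finset.univ.min' Finset.univ_nonempty, fun x => Finset.min'_le _ _ (Finset.mem_univ x)⟩
  refine ⟨LinearMap.range_eq_top.2 fun x => ⟨simplexH k a 0 x, ?_⟩, fun m => le_antisymm ?_ ?_⟩
  · exact LinearMap.congr_fun (simplex_homotopy_zero ha) x
  · intro x hx
    have := LinearMap.congr_fun (simplex_homotopy (k := k) ha m) x
    rw [LinearMap.mem_ker] at hx
    rw [LinearMap.add_apply, LinearMap.comp_apply, LinearMap.comp_apply, hx, map_zero,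
      add_zero] at this
    exact ⟨_, this⟩
  · rintro _ ⟨y, rfl⟩
    exact LinearMap.congr_fun (simplexD_simplexD m) y

/-! ### Comparison of the differentials -/

/-- The basis bijection matches the two differentials up to the global sign `-1`. -/
lemma simplexD_grEquiv (k : Type*) [CommRing k] {n : ℕ} {u : List ℕ} (hu : IsTuple n u) (m : ℕ)
    (b : {b : STuple n (m + 1) // (List.ofFn b.B).flatten = u}) :
    simplexD k {i // i ∈ Cuts n u} m (Finsupp.single (grEquiv hu (m + 1) b) 1) =
      -(Finsupp.domLCongr (R := k) (grEquiv hu m) (dgrU k n u m (Finsupp.single b 1))) := by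
  obtain ⟨⟨B, hB⟩, hBu⟩ := b
  simp only at hBu
  have hp := hB.goodPos hu hBu
  have hsub := hB.cutSet_subset hu hBu
  have hcard := hB.card_cutSet hu hBu
  have hmerge : ∀ i : Fin (m + 1), mergeAt B i = blocks u (skipPos (cpos B) i) m := by
    intro i
    rw [← mergeAt_blocks hp hu.length i, ← hBu, blocks_cpos]
  have hskip : ∀ i : Fin (m + 1), GoodPos n m u (skipPos (cpos B) i) :=
    fun i => hp.skip (by omega)
  have hgr : ∀ i : Fin (m + 1), Finsupp.domLCongr (R := k) (grEquiv hu m)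
      (toGr k n u m (mergeAt B i)) =
        simplexBasis k m (toCuts n u ((cutSet B).erase (cpos B (i + 1)))) := by
    intro i
    have hi := hskip i
    have hcs : (cutSet B).erase (cpos B (i + 1)) = cutSet (mergeAt B i) := by
      rw [hmerge i, cutSet_blocks hi hu.length, hp.image_skip (by omega), cutSet]
    have h : IsSTuple n m (mergeAt B i) ∧ (List.ofFn (mergeAt B i)).flatten = u := by
      rw [hmerge i]
      exact ⟨hi.isSTuple hu, hi.flatten hu.length⟩
    rw [toGr, dif_pos h, Finsupp.domLCongr_single, hcs,
      simplexBasis_of_card (by rw [card_toCuts (h.1.cutSet_subset hu h.2),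
        h.1.card_cutSet hu h.2])]
    rfl
  have hcardS : (toCuts n u (cutSet B)).card = m + 1 := by rw [card_toCuts hsub, hcard]
  have hL : (Finsupp.single (grEquiv hu (m + 1) ⟨⟨B, hB⟩, hBu⟩) 1 :
      SimplexChain k {i // i ∈ Cuts n u} (m + 1)) =
      simplexBasis k (m + 1) (toCuts n u (cutSet B)) := by
    rw [simplexBasis_of_card hcardS]
    rfl
  rw [hL, simplexD_basis hcardS, dgrU, Finsupp.lift_apply,
    Finsupp.sum_single_index (by simp), one_smul, map_sum, ← Finset.sum_neg_distrib]
  symm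
  refine Finset.sum_bij
    (fun (i : Fin (m + 1)) _ => ⟨cpos B (i + 1), hp.cut (i + 1) (by omega) (by omega)⟩)
    (fun i _ => ?_) (fun i _ j _ hij => ?_) (fun x hx => ?_) (fun i _ => ?_)
  · simp only [toCuts, Finset.mem_subtype, cutSet]
    exact Finset.mem_image_of_mem _ (by simp only [Finset.mem_Icc]; omega)
  · have := hp.injOn (x₁ := i + 1) (x₂ := j + 1) (by simp only [Set.mem_Icc]; omega)
      (by simp only [Set.mem_Icc]; omega) (congrArg Subtype.val hij)
    exact Fin.ext (by omega)
  · simp only [toCuts, Finset.mem_subtype, cutSet, Finset.mem_image, Finset.mem_Icc] at hx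
    obtain ⟨j, hj, hjx⟩ := hx
    refine ⟨⟨j - 1, by omega⟩, Finset.mem_univ _, Subtype.ext ?_⟩
    simp only [Nat.sub_add_cancel hj.1, hjx]
  · rw [map_zsmul, hgr i, card_filter_toCuts hsub, toCuts_erase, cutSet,
      hp.card_lt (by omega), pow_succ, mul_neg_one, neg_smul, neg_neg]

/-- The isomorphism `gr_u ≃ C_*(Cuts(u))` in degree `m`: the basis bijection twisted by the sign
`(-1) ^ m`, which absorbs the sign discrepancy between the differentials. -/
noncomputable def grIso (k : Type*) [CommRing k] {n : ℕ} {u : List ℕ} (hu : IsTuple n u) (m : ℕ) :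
    GrU k n u m ≃ₗ[k] SimplexChain k {i // i ∈ Cuts n u} m :=
  (Finsupp.domLCongr (grEquiv hu m)).trans (LinearEquiv.smulOfUnit ((-1 : kˣ) ^ m))

lemma grIso_comm (k : Type*) [CommRing k] {n : ℕ} {u : List ℕ} (hu : IsTuple n u) (m : ℕ) :
    (simplexD k {i // i ∈ Cuts n u} m).comp (grIso k hu (m + 1)).toLinearMap =
      (grIso k hu m).toLinearMap.comp (dgrU k n u m) := by
  refine Finsupp.lhom_ext' fun b => LinearMap.ext_ring ?_
  have happ : ∀ (l : ℕ) (x : GrU k n u l), grIso k hu l x =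
      ((-1 : k) ^ l) • Finsupp.domLCongr (R := k) (grEquiv hu l) x := by
    intro l x
    change ((-1 : kˣ) ^ l) • Finsupp.domLCongr (R := k) (grEquiv hu l) x = _
    rw [Units.smul_def]
    simp
  simp only [LinearMap.comp_apply, Finsupp.lsingle_apply, LinearEquiv.coe_coe, happ, map_smul]
  rw [Finsupp.domLCongr_single, simplexD_grEquiv k hu m b, pow_succ, mul_neg_one, neg_smul,
    smul_neg, neg_neg]

/-- Lemma 4.33/4.34 of Hoffbeck–Vespa: for `n ≥ 1` and `u ∈ Tuple(n)`, the complex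
`gr_u` is isomorphic as a chain complex to `C_*(Cuts(u))`, and in particular `gr_u` is
exact: its homology vanishes in every degree. -/
theorem grU_iso_simplexChain_and_exact (k : Type*) [CommRing k] (n : ℕ) (hn : 1 ≤ n)
    (u : List ℕ) (hu : IsTuple n u) :
    (∃ e : ∀ m : ℕ, GrU k n u m ≃ₗ[k] SimplexChain k {i // i ∈ Cuts n u} m,
      ∀ m : ℕ, (simplexD k {i // i ∈ Cuts n u} m).comp (e (m + 1)).toLinearMap =
        (e m).toLinearMap.comp (dgrU k n u m)) ∧
    (LinearMap.range (dgrU k n u 0) = ⊤ ∧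
      ∀ m : ℕ, LinearMap.ker (dgrU k n u m) = LinearMap.range (dgrU k n u (m + 1))) := by
  have hcomm := grIso_comm k hu
  refine ⟨⟨grIso k hu, hcomm⟩, ?_⟩
  -- The last position is always an admissible cut, and `1 ≤ n` keeps it away from `0`.
  have : Nonempty {i // i ∈ Cuts n u} := ⟨⟨n, by simp [Cuts, hn]⟩⟩
  obtain ⟨h0, hex⟩ := simplex_exact k {i // i ∈ Cuts n u}
  have hc : ∀ m x, simplexD k {i // i ∈ Cuts n u} m (grIso k hu (m + 1) x) =
      grIso k hu m (dgrU k n u m x) := fun m x => LinearMap.congr_fun (hcomm m) x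
  -- Lifting a preimage along the isomorphism.
  have hrange : ∀ m x, grIso k hu m x ∈ LinearMap.range (simplexD k {i // i ∈ Cuts n u} m) →
      x ∈ LinearMap.range (dgrU k n u m) := by
    rintro m x ⟨y, hy⟩
    refine ⟨(grIso k hu (m + 1)).symm y, (grIso k hu m).injective ?_⟩
    rw [← hc, LinearEquiv.apply_symm_apply, hy]
  refine ⟨eq_top_iff.2 fun x _ => hrange 0 x (h0 ▸ Submodule.mem_top), fun m => ?_⟩
  refine le_antisymm (fun x hx => hrange (m + 1) x ?_) ?_
  · rw [← hex m, LinearMap.mem_ker, hc, LinearMap.mem_ker.1 hx, map_zero]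
  · rintro _ ⟨y, rfl⟩
    rw [LinearMap.mem_ker]
    refine (grIso k hu m).injective ?_
    rw [map_zero, ← hc, ← hc, ← LinearMap.mem_ker, hex m]
    exact ⟨_, rfl⟩
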